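/- arXiv:1003.6123 — 2 statements merged into one kernel-verified Lean document; each statement's English description precedes it below -/
import Mathlib

section
/- Let n ≥ 1 and a : ℕ, and let m = #{ i < n : T(a+i) = 1 } (the number of 1s in the factor T[a,a+n−1]). Then: for all i ≤ n, P(2a, 2n+1, 2i) = P(a, n+1, i) + m; and for all i < n: if T(a+i) = 0 and (a+i) ≺ (a+n), then P(2a, 2n+1, 2i+1) = P(a, n+1, i) + m + (n+1); if T(a+i) = 0 and (a+n) ≺ (a+i), then P(2a, 2n+1, 2i+1) = P(a, n+1, i) + m + n; if T(a+i) = 1 and (a+i) ≺ (a+n), then (P(2a, 2n+1, 2i+1) : ℤ) = P(a, n+1, i) + m − n; and if T(a+i) = 1 and (a+n) ≺ (a+i), then (P(2a, 2n+1, 2i+1) : ℤ) = P(a, n+1, i) + m − (n+1). -/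
/-!
Write `t` for the Thue-Morse word. Since `t (2x) = t x` and `t (2x+1) = 1 - t x`, the shifts of `t`
at the positions of the image word fall into four consecutive lexicographic blocks:

  odd `2x+1` with `t x = 1`  ≺  even `2x` with `t x = 0`
    ≺  even `2x` with `t x = 1`  ≺  odd `2x+1` with `t x = 0`.

The first and last comparisons (`prec_odd_even`, `prec_even_odd`) rest on `t` having no factor `000`
or `111`. Even positions are ordered as the `x` are (`prec_even`), and so are odd positions within
one block (`prec_odd`). The rank of a position is then found by splitting the count into even and
odd indices (`P_split`) and comparing summands with those of `P a (n + 1) i`; the index `n`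
contributes to the latter but has no odd counterpart, whence the dependence on how `a + i` and
`a + n` compare.
-/

/-- The Thue-Morse word: parity of the binary digit sum. -/
def TM (n : ℕ) : ℕ := (Nat.digits 2 n).sum % 2

/-- `Prec a b` : the shift of the Thue-Morse word at `a` is lexicographically
smaller than the shift at `b`. -/
def Prec (a b : ℕ) : Prop :=
  ∃ c : ℕ, (∀ i < c, TM (a + i) = TM (b + i)) ∧ TM (a + c) < TM (b + c)

/-- The subpermutations of `π_T` of length `N` starting at `a` and `b` coincide. -/
def SamePerm (N a b : ℕ) : Prop :=
  ∀ i < N, ∀ j < N, (Prec (a + i) (a + j) ↔ Prec (b + i) (b + j))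

open scoped Classical in
/-- `P a N i` : the 0-indexed rank of position `a+i` within the subpermutation
`π_T[a, a+N-1]`. -/
noncomputable def P (a N i : ℕ) : ℕ :=
  ((Finset.range N).filter (fun j => Prec (a + j) (a + i))).card

/-- The subpermutations `π_T[a,a+N-1]` and `π_T[b,b+N-1]` have the same form. -/
def SameForm (N a b : ℕ) : Prop :=
  ∀ i < N - 1, (Prec (a + i) (a + (i + 1))) ↔ (Prec (b + i) (b + (i + 1)))

/-- The subpermutation `π_T[a,a+N-1]` is of type `k`. -/
def TypeK (k N a : ℕ) : Prop :=
  1 ≤ k ∧ 2 * k ≤ N ∧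
  ∃ ε : ℤ, (ε = 1 ∨ ε = -1) ∧
    ∀ i < k, (P a N i : ℤ) = P a N (N - k + i) + ε

/-- Positions `a` and `b` form a complementary pair of type `k` of length `N`. -/
def CompPair (k N a b : ℕ) : Prop :=
  1 ≤ k ∧ 2 * k ≤ N ∧
  ∃ ε : ℤ, (ε = 1 ∨ ε = -1) ∧
    (∀ i < k,
      (P a N i : ℤ) = P a N (N - k + i) + ε ∧
      (P b N i : ℤ) = P a N (N - k + i) ∧
      (P b N (N - k + i) : ℤ) = P a N i) ∧
    (∀ j, k ≤ j → j < N - k → P b N j = P a N j)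

/-- The permutation complexity of the Thue-Morse word: the number of distinct
subpermutations of `π_T` of length `N`. -/
noncomputable def tau (N : ℕ) : ℕ :=
  Set.ncard (Set.range (fun a : ℕ => fun i j : Fin N => Prec (a + i) (a + j)))

lemma TM_lt_two (x : ℕ) : TM x < 2 := Nat.mod_lt _ two_pos

lemma TM_two_mul (x : ℕ) : TM (2 * x) = TM x := by
  rcases Nat.eq_zero_or_pos x with rfl | hx
  · rfl
  · have h := Nat.digits_add_two_add_one 0 (2 * x - 1)
    rw [show 2 * x - 1 + 1 = 2 * x by omega] at h
    simp [TM, h]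

lemma TM_two_mul_add_one (x : ℕ) : TM (2 * x + 1) = 1 - TM x := by
  have h := Nat.digits_add_two_add_one 0 (2 * x)
  have h1 : (2 * x + 1) % 2 = 1 := by omega
  have h2 : (2 * x + 1) / 2 = x := by omega
  simp only [Nat.zero_add, h1, h2] at h
  simp only [TM, h, List.sum_cons]
  omega

/-- Among any three consecutive positions, two form a pair
`2k, 2k+1`, which carries distinct letters. -/
lemma not_cube (x : ℕ) : ¬ (TM x = TM (x + 1) ∧ TM (x + 1) = TM (x + 2)) := by
  rintro ⟨h1, h2⟩
  obtain ⟨k, rfl | rfl⟩ := Nat.even_or_odd' x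
  · have := TM_two_mul k
    have := TM_two_mul_add_one k
    have := TM_lt_two k
    omega
  · have := TM_two_mul (k + 1)
    have := TM_two_mul_add_one (k + 1)
    have := TM_lt_two (k + 1)
    simp only [Nat.mul_add, Nat.mul_one, Nat.add_assoc, Nat.reduceAdd] at *
    omega

lemma prec_cons (x y : ℕ) :
    Prec x y ↔ TM x < TM y ∨ (TM x = TM y ∧ Prec (x + 1) (y + 1)) := by
  constructor
  · rintro ⟨c, hc, hlt⟩
    cases c with
    | zero => exact Or.inl hlt
    | succ c =>
      refine Or.inr ⟨hc 0 (by omega), c, fun i hi => ?_, ?_⟩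
      · have := hc (i + 1) (by omega)
        rwa [Nat.add_right_comm, Nat.add_right_comm y, Nat.add_assoc, Nat.add_assoc y]
      · rwa [Nat.add_right_comm, Nat.add_right_comm y, Nat.add_assoc, Nat.add_assoc y]
  · rintro (h | ⟨h0, c, hc, hlt⟩)
    · exact ⟨0, by simp, h⟩
    · refine ⟨c + 1, fun i hi => ?_, ?_⟩
      · cases i with
        | zero => exact h0
        | succ i =>
          have := hc i (by omega)
          rwa [Nat.add_right_comm, Nat.add_right_comm y, Nat.add_assoc, Nat.add_assoc y] at this
      · rwa [Nat.add_right_comm, Nat.add_right_comm y, Nat.add_assoc, Nat.add_assoc y] at hlt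

lemma prec_asymm {x y : ℕ} (h : Prec x y) : ¬ Prec y x := by
  rintro ⟨d, hd, hd'⟩
  obtain ⟨c, hc, hc'⟩ := h
  rcases lt_trichotomy c d with h | rfl | h
  · have := hd c h
    omega
  · omega
  · have := hc d h
    omega

lemma prec_even (x y : ℕ) : Prec (2 * x) (2 * y) ↔ Prec x y := by
  have e (z k : ℕ) : TM (2 * z + 2 * k) = TM (z + k) := by rw [← Nat.mul_add, TM_two_mul]
  have o (z k : ℕ) : TM (2 * z + (2 * k + 1)) = 1 - TM (z + k) := by
    rw [← Nat.add_assoc, ← Nat.mul_add, TM_two_mul_add_one]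
  constructor
  · rintro ⟨c, hc, hlt⟩
    obtain ⟨k, rfl | rfl⟩ := Nat.even_or_odd' c
    · refine ⟨k, fun i hi => ?_, ?_⟩
      · rw [← e x, ← e y]
        exact hc (2 * i) (by omega)
      · rwa [e, e] at hlt
    -- a first difference at an odd offset is impossible: the preceding letter determines it
    · have := hc (2 * k) (by omega)
      rw [e, e] at this
      rw [o, o] at hlt
      omega
  · rintro ⟨c, hc, hlt⟩
    refine ⟨2 * c, fun i hi => ?_, by rwa [e, e]⟩
    obtain ⟨k, rfl | rfl⟩ := Nat.even_or_odd' i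
    · rw [e, e, hc k (by omega)]
    · rw [o, o, hc k (by omega)]

/-- Between odd positions the first letters compare in reverse; on a tie the order is that of the
original positions. -/
lemma prec_odd (x y : ℕ) :
    Prec (2 * x + 1) (2 * y + 1) ↔ TM y < TM x ∨ (TM x = TM y ∧ Prec x y) := by
  have hx := TM_lt_two x
  have hy := TM_lt_two y
  rw [prec_cons, prec_cons x y, TM_two_mul_add_one, TM_two_mul_add_one,
    show 2 * x + 1 + 1 = 2 * (x + 1) by ring, show 2 * y + 1 + 1 = 2 * (y + 1) by ring, prec_even]
  have h1 : 1 - TM x < 1 - TM y ↔ TM y < TM x := by omega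
  have h2 : 1 - TM x = 1 - TM y ↔ TM x = TM y := by omega
  rw [h1, h2]
  constructor
  · tauto
  · rintro (h | ⟨h, h' | h'⟩)
    · exact Or.inl h
    · omega
    · exact Or.inr h'

/-- The letters of the image word at offsets `0, …, 3` from `2 * x`. -/
lemma TM_even_window (x : ℕ) : TM (2 * x) = TM x ∧ TM (2 * x + 1) = 1 - TM x ∧
    TM (2 * x + 2) = TM (x + 1) ∧ TM (2 * x + 3) = 1 - TM (x + 1) :=
  ⟨TM_two_mul x, TM_two_mul_add_one x, TM_two_mul (x + 1), TM_two_mul_add_one (x + 1)⟩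

/-- Suppose `t y = 1`, so that the shift at `2 * y + 1` starts with `0`. If the shift at `2 * x` did
not exceed it within four letters, both would start with `01`, which forces `t (y + 1) = 1`, and
then continue `01`, which forces `t (y + 2) = 1`: a factor `111` at `y`. The case `t y = 0` is
the same with the letters exchanged. -/
lemma prec_odd_even_or (x y : ℕ) :
    (TM y = 1 → Prec (2 * y + 1) (2 * x)) ∧ (TM y = 0 → Prec (2 * x) (2 * y + 1)) := by
  obtain ⟨a0, a1, a2, a3⟩ := TM_even_window x
  obtain ⟨-, b1, b2, b3⟩ := TM_even_window y
  have b4 : TM (2 * y + 4) = TM (y + 2) := TM_two_mul (y + 2)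
  have l0 := TM_lt_two x
  have l1 := TM_lt_two (x + 1)
  have l2 := TM_lt_two (y + 1)
  have l3 := TM_lt_two (y + 2)
  have hc := not_cube y
  constructor
  all_goals
    intro h
    rw [prec_cons, prec_cons (_ + 1), prec_cons (_ + 1 + 1), prec_cons (_ + 1 + 1 + 1)]
    simp only [Nat.add_assoc, Nat.reduceAdd, a0, a1, a2, a3, b1, b2, b3, b4]
    grind

lemma prec_odd_even (x y : ℕ) : Prec (2 * y + 1) (2 * x) ↔ TM y = 1 := by
  refine ⟨fun h => ?_, (prec_odd_even_or x y).1⟩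
  by_contra h1
  have := TM_lt_two y
  exact prec_asymm h ((prec_odd_even_or x y).2 (by omega))

lemma prec_even_odd (x y : ℕ) : Prec (2 * x) (2 * y + 1) ↔ TM y = 0 := by
  refine ⟨fun h => ?_, (prec_odd_even_or x y).2⟩
  by_contra h1
  have := TM_lt_two y
  exact prec_asymm h ((prec_odd_even_or x y).1 (by omega))

lemma sum_split (f : ℕ → ℕ) (n : ℕ) : ∑ j ∈ Finset.range (2 * n + 1), f j =
    ∑ j ∈ Finset.range (n + 1), f (2 * j) + ∑ j ∈ Finset.range n, f (2 * j + 1) := by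
  induction n with
  | zero => simp
  | succ n ih =>
    rw [show 2 * (n + 1) + 1 = 2 * n + 1 + 1 + 1 by ring, Finset.sum_range_succ,
      Finset.sum_range_succ, ih, Finset.sum_range_succ _ (n + 1), Finset.sum_range_succ _ n,
      Finset.sum_range_succ _ n, Nat.mul_add]
    ring

open scoped Classical in
lemma P_eq_sum (a n i : ℕ) : P a (n + 1) i =
    ∑ j ∈ Finset.range n, (if Prec (a + j) (a + i) then 1 else 0) +
      (if Prec (a + n) (a + i) then 1 else 0) := by
  rw [P, Finset.card_filter, Finset.sum_range_succ]

open scoped Classical in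
lemma P_split (a n r : ℕ) : P (2 * a) (2 * n + 1) r =
    ∑ j ∈ Finset.range (n + 1), (if Prec (2 * (a + j)) (2 * a + r) then 1 else 0) +
      ∑ j ∈ Finset.range n, (if Prec (2 * (a + j) + 1) (2 * a + r) then 1 else 0) := by
  rw [P, Finset.card_filter, sum_split]
  simp only [Nat.mul_add, Nat.add_assoc]

open scoped Classical in
/-- For `t (a + i) = 0`, the even indices and the odd ones over a letter `1` all precede `2i+1`. -/
lemma P_odd_zero (a n i : ℕ) (h : TM (a + i) = 0) :
    P (2 * a) (2 * n + 1) (2 * i + 1) + (if Prec (a + n) (a + i) then 1 else 0) =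
      P a (n + 1) i + ((Finset.range n).filter (fun i => TM (a + i) = 1)).card + (n + 1) := by
  have key (j : ℕ) : (if Prec (2 * (a + j) + 1) (2 * (a + i) + 1) then 1 else 0) =
      (if Prec (a + j) (a + i) then 1 else 0) + (if TM (a + j) = 1 then 1 else 0) := by
    have hj := TM_lt_two (a + j)
    have hp := (prec_cons (a + j) (a + i)).1
    rw [prec_odd]
    split_ifs <;> first | omega | (exfalso; grind)
  rw [P_split, P_eq_sum, Finset.card_filter, ← Nat.add_assoc (2 * a), ← Nat.mul_add]
  simp only [key, Finset.sum_add_distrib, prec_even_odd, h, if_true, Finset.sum_const,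
    Finset.card_range, smul_eq_mul]
  omega

open scoped Classical in
/-- For `t (a + i) = 1`, only odd indices over a letter `1` precede `2i+1`, whereas in the original
word every index over a letter `0` precedes `i`. -/
lemma P_odd_one (a n i : ℕ) (h : TM (a + i) = 1) :
    P (2 * a) (2 * n + 1) (2 * i + 1) + n + (if Prec (a + n) (a + i) then 1 else 0) =
      P a (n + 1) i + ((Finset.range n).filter (fun i => TM (a + i) = 1)).card := by
  have key (j : ℕ) : (if Prec (2 * (a + j) + 1) (2 * (a + i) + 1) then 1 else 0) + 1 =
      (if Prec (a + j) (a + i) then 1 else 0) + (if TM (a + j) = 1 then 1 else 0) := by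
    have hj := TM_lt_two (a + j)
    have hp := prec_cons (a + j) (a + i)
    rw [prec_odd]
    split_ifs <;> first | omega | (exfalso; grind)
  have hs := Finset.sum_congr (rfl : Finset.range n = Finset.range n) fun j _ => key j
  simp only [Finset.sum_add_distrib, Finset.sum_const, Finset.card_range, smul_eq_mul,
    mul_one] at hs
  rw [P_split, P_eq_sum, Finset.card_filter, ← Nat.add_assoc (2 * a), ← Nat.mul_add]
  simp only [prec_even_odd, h, one_ne_zero, if_false, Finset.sum_const_zero]
  omega

/-- Formula for the ranks in the image subpermutation under the Thue-Morse
morphism in terms of the ranks of the original subpermutation. -/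
theorem calculate_forward_image (n a : ℕ) (hn : 1 ≤ n) (m : ℕ)
    (hm : m = ((Finset.range n).filter (fun i => TM (a + i) = 1)).card) :
    (∀ i ≤ n, P (2 * a) (2 * n + 1) (2 * i) = P a (n + 1) i + m) ∧
    (∀ i < n,
      (TM (a + i) = 0 → Prec (a + i) (a + n) →
        P (2 * a) (2 * n + 1) (2 * i + 1) = P a (n + 1) i + m + (n + 1)) ∧
      (TM (a + i) = 0 → Prec (a + n) (a + i) →
        P (2 * a) (2 * n + 1) (2 * i + 1) = P a (n + 1) i + m + n) ∧
      (TM (a + i) = 1 → Prec (a + i) (a + n) →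
        (P (2 * a) (2 * n + 1) (2 * i + 1) : ℤ) = P a (n + 1) i + m - n) ∧
      (TM (a + i) = 1 → Prec (a + n) (a + i) →
        (P (2 * a) (2 * n + 1) (2 * i + 1) : ℤ) = P a (n + 1) i + m - (n + 1))) := by
  classical
  subst hm
  refine ⟨fun i _ => ?_,
    fun i _ => ⟨fun h hp => ?_, fun h hp => ?_, fun h hp => ?_, fun h hp => ?_⟩⟩
  · rw [P_split, P, Finset.card_filter, Finset.card_filter, ← Nat.mul_add]
    simp only [prec_even, prec_odd_even]
  · simpa [prec_asymm hp] using P_odd_zero a n i h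
  · have := P_odd_zero a n i h
    rw [if_pos hp] at this
    omega
  · have := P_odd_one a n i h
    rw [if_neg (prec_asymm hp)] at this
    omega
  · have := P_odd_one a n i h
    rw [if_pos hp] at this
    omega
end

section
/- If positions a and b form a complementary pair of type s of length N and positions a and c form a complementary pair of type t of length N (with s, t ≥ 1), then SamePerm N b c; i.e., a subpermutation of π_T has at most one complementary partner. -/
/-! ### Letters of the Thue-Morse word -/

theorem TM_lt (n : ℕ) : TM n < 2 := Nat.mod_lt _ (by norm_num)

theorem TM_even (n : ℕ) : TM (2 * n) = TM n := by
  rcases Nat.eq_zero_or_pos n with rfl | h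
  · rfl
  · unfold TM
    rw [Nat.digits_def' (by norm_num) (by omega)]
    simp

theorem TM_odd (n : ℕ) : TM (2 * n + 1) = 1 - TM n := by
  unfold TM
  rw [Nat.digits_def' (by norm_num) (by omega)]
  have h1 : (2 * n + 1) % 2 = 1 := by omega
  have h2 : (2 * n + 1) / 2 = n := by omega
  rw [h1, h2, List.sum_cons]
  omega

theorem TM_succ_of_even {n : ℕ} (h : n % 2 = 0) : TM (n + 1) = 1 - TM n := by
  rw [show n = 2 * (n / 2) by omega, TM_odd, TM_even]

theorem TM_pow_mul (k n : ℕ) : TM (2 ^ k * n) = TM n := by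
  induction k with
  | zero => simp
  | succ k ih => rw [pow_succ', mul_assoc, TM_even, ih]

theorem no_cube (n : ℕ) (h1 : TM n = TM (n + 1)) (h2 : TM (n + 1) = TM (n + 2)) : False := by
  have := TM_lt n
  have := TM_lt (n + 1)
  rcases Nat.mod_two_eq_zero_or_one n with h | h
  · have := TM_succ_of_even h
    omega
  · have : TM (n + 2) = 1 - TM (n + 1) := TM_succ_of_even (n := n + 1) (by omega)
    omega

/-- An alternating word of length five would be a cube after undoing the morphism
`0 ↦ 01, 1 ↦ 10`. -/
theorem no_alternating {n : ℕ} (hn : n % 2 = 1) (h1 : TM (n + 1) ≠ TM n)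
    (h2 : TM (n + 3) = TM (n + 1)) : False := by
  obtain ⟨m, rfl⟩ : ∃ m, n = 2 * m + 1 := ⟨n / 2, by omega⟩
  have e0 := TM_odd m
  have e1 := TM_even (m + 1)
  have e2 := TM_even (m + 2)
  rw [show 2 * (m + 1) = 2 * m + 1 + 1 by ring] at e1
  rw [show 2 * (m + 2) = 2 * m + 1 + 3 by ring] at e2
  have := TM_lt m
  have := TM_lt (m + 1)
  have := TM_lt (m + 2)
  exact no_cube m (by omega) (by omega)

/-! ### Positions of repeated factors -/

/-- A factor of length four read at positions of different parity does not occur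
(the letter following the odd occurrence is forced and completes an alternating word). -/
theorem parity_eq {x y : ℕ} (h : ∀ i < 4, TM (x + i) = TM (y + i)) : x % 2 = y % 2 := by
  by_contra hne
  wlog hx : x % 2 = 0 generalizing x y
  · exact this (fun i hi => (h i hi).symm) (Ne.symm hne) (by omega)
  have hy : y % 2 = 1 := by omega
  have h0 := h 0 (by norm_num)
  have h1 := h 1 (by norm_num)
  have h2 := h 2 (by norm_num)
  have h3 := h 3 (by norm_num)
  have a1 := TM_succ_of_even hx
  have a3 : TM (x + 3) = 1 - TM (x + 2) := TM_succ_of_even (n := x + 2) (by omega)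
  have b2 : TM (y + 2) = 1 - TM (y + 1) := TM_succ_of_even (n := y + 1) (by omega)
  have := TM_lt x
  have := TM_lt (x + 1)
  have := TM_lt (x + 2)
  simp only [add_zero] at h0
  exact no_alternating hy (by omega) (by omega)

/-- The Thue-Morse word is not eventually periodic. -/
theorem eq_of_agree : ∀ a b : ℕ, (∀ i, TM (a + i) = TM (b + i)) → a = b := by
  intro a
  induction a using Nat.strong_induction_on with
  | _ a ih =>
  intro b
  induction b using Nat.strong_induction_on with
  | _ b ihb =>
  intro h
  have hpar := parity_eq (fun i _ => h i)
  have key : ∀ i, TM (a / 2 + i) = TM (b / 2 + i) := by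
    intro i
    rcases Nat.mod_two_eq_zero_or_one a with ha | ha
    · have := h (2 * i)
      rwa [show a + 2 * i = 2 * (a / 2 + i) by omega, show b + 2 * i = 2 * (b / 2 + i) by omega,
        TM_even, TM_even] at this
    · have := h (2 * i)
      rw [show a + 2 * i = 2 * (a / 2 + i) + 1 by omega,
        show b + 2 * i = 2 * (b / 2 + i) + 1 by omega, TM_odd, TM_odd] at this
      have := TM_lt (a / 2 + i)
      have := TM_lt (b / 2 + i)
      omega
  rcases Nat.eq_zero_or_pos a with ha | ha
  · rcases Nat.eq_zero_or_pos b with hb | hb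
    · omega
    · have := ihb (b / 2) (by omega) (by
        intro i
        have := key i
        rwa [ha] at this ⊢)
      omega
  · have := ih (a / 2) (by omega) (b / 2) key
    omega

/-- The right end of a long factor with two continuations is a multiple of a large power of `2`.
The length condition is `3 * 2 ^ (k - 1) < M` without the truncated subtraction. -/
theorem align (k : ℕ) : ∀ {a b M : ℕ}, 3 * 2 ^ k < 2 * M →
    (∀ i < M, TM (a + i) = TM (b + i)) → TM (a + M) ≠ TM (b + M) → 2 ^ k ∣ a + M := by
  induction k with
  | zero => intros; simp
  | succ k ih =>
    intro a b M hM hag hne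
    rw [pow_succ] at hM
    have hk : 1 ≤ 2 ^ k := Nat.one_le_two_pow
    have hM4 : 4 ≤ M := by omega
    have hpar : (a + (M - 4)) % 2 = (b + (M - 4)) % 2 := parity_eq (fun i hi => by
      rw [add_assoc, add_assoc]
      exact hag _ (by omega))
    -- if `a + M` were odd, the letter at offset `M` would be forced by the one before
    have hev : (a + M) % 2 = 0 := by
      by_contra hodd
      have e1 := TM_succ_of_even (n := a + (M - 1)) (by omega)
      have e2 := TM_succ_of_even (n := b + (M - 1)) (by omega)
      rw [show a + (M - 1) + 1 = a + M by omega] at e1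
      rw [show b + (M - 1) + 1 = b + M by omega] at e2
      exact hne (by rw [e1, e2, hag _ (by omega)])
    have ea : a + M = 2 * (a / 2 + (M + 1) / 2) := by omega
    have eb : b + M = 2 * (b / 2 + (M + 1) / 2) := by omega
    have hd : 2 ^ k ∣ a / 2 + (M + 1) / 2 := by
      refine ih (b := b / 2) (by omega) ?_ ?_
      · intro i hi
        have h := hag (2 * i) (by omega)
        rcases Nat.mod_two_eq_zero_or_one a with ha | ha
        · rwa [show a + 2 * i = 2 * (a / 2 + i) by omega,
            show b + 2 * i = 2 * (b / 2 + i) by omega, TM_even, TM_even] at h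
        · rw [show a + 2 * i = 2 * (a / 2 + i) + 1 by omega,
            show b + 2 * i = 2 * (b / 2 + i) + 1 by omega, TM_odd, TM_odd] at h
          have := TM_lt (a / 2 + i)
          have := TM_lt (b / 2 + i)
          omega
      · rwa [ea, eb, TM_even, TM_even] at hne
    rw [ea, pow_succ']
    exact Nat.mul_dvd_mul_left 2 hd

/-! ### Comparing shifts -/

/-- At the first disagreement of the shifts at `m` and `n`, the one at `m` has the letter `y`.
Thus `LetterLess 0 m n` means `Prec m n`, and `LetterLess 1 m n` means `Prec n m`; the letter `y`
lets both orders be treated at once. -/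
def LetterLess (y m n : ℕ) : Prop :=
  ∃ c, (∀ i < c, TM (m + i) = TM (n + i)) ∧ TM (m + c) = y ∧ TM (n + c) ≠ y

theorem LetterLess.of_two_mul {y m n : ℕ} (h : LetterLess y (2 * m) (2 * n)) :
    LetterLess y m n := by
  obtain ⟨c, hc, h1, h2⟩ := h
  have hev : c % 2 = 0 := by
    by_contra hodd
    have h3 := hc (c - 1) (by omega)
    have e1 := TM_succ_of_even (n := 2 * m + (c - 1)) (by omega)
    have e2 := TM_succ_of_even (n := 2 * n + (c - 1)) (by omega)
    rw [show 2 * m + (c - 1) + 1 = 2 * m + c by omega] at e1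
    rw [show 2 * n + (c - 1) + 1 = 2 * n + c by omega] at e2
    omega
  refine ⟨c / 2, fun i hi => ?_, ?_, ?_⟩
  · have := hc (2 * i) (by omega)
    rwa [← mul_add, ← mul_add, TM_even, TM_even] at this
  · rwa [show 2 * m + c = 2 * (m + c / 2) by omega, TM_even] at h1
  · rwa [show 2 * n + c = 2 * (n + c / 2) by omega, TM_even] at h2

theorem LetterLess.of_pow_mul {y m n : ℕ} (k : ℕ) (h : LetterLess y (2 ^ k * m) (2 ^ k * n)) :
    LetterLess y m n := by
  induction k with
  | zero => simpa using h
  | succ k ih =>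
    rw [pow_succ', mul_assoc, mul_assoc] at h
    exact ih h.of_two_mul

/-- Among the shifts starting with `y`, those at even positions are on the far side from `y` of
those at odd positions. -/
theorem LetterLess.even {y m n : ℕ} (h : LetterLess y m n) (hm : TM m = y) (hn : TM n = y)
    (hev : m % 2 = 0) : n % 2 = 0 := by
  by_contra hodd
  obtain ⟨c, hc, h1, h2⟩ := h
  have m1 := TM_succ_of_even hev
  have m3 : TM (m + 3) = 1 - TM (m + 2) := TM_succ_of_even (n := m + 2) (by omega)
  have n2 : TM (n + 2) = 1 - TM (n + 1) := TM_succ_of_even (n := n + 1) (by omega)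
  have := TM_lt m
  have := TM_lt (m + 2)
  have := TM_lt (n + 1)
  have := TM_lt (n + 3)
  have c0 : c ≠ 0 := by rintro rfl; simp at h2; omega
  have c1 : c ≠ 1 := by rintro rfl; omega
  have e1 := hc 1 (by omega)
  have c2 : c ≠ 2 := by rintro rfl; omega
  have e2 := hc 2 (by omega)
  have c3 : c ≠ 3 := by rintro rfl; omega
  have e3 := hc 3 (by omega)
  exact no_alternating (n := n) (by omega) (by omega) (by omega)

theorem LetterLess.pow_dvd (k : ℕ) : ∀ {y m n : ℕ}, LetterLess y m n → TM m = y → TM n = y →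
    2 ^ k ∣ m → 2 ^ k ∣ n := by
  induction k with
  | zero => intros; simp
  | succ k ih =>
    rintro y m n h hm hn ⟨d, rfl⟩
    have hev := h.even hm hn (by rw [pow_succ', mul_assoc]; omega)
    obtain ⟨n', rfl⟩ : ∃ n', n = 2 * n' := ⟨n / 2, by omega⟩
    rw [pow_succ', mul_assoc] at h hm
    rw [TM_even] at hm hn
    rw [pow_succ']
    exact Nat.mul_dvd_mul_left 2 (ih h.of_two_mul hm hn (Dvd.intro _ rfl))

theorem Prec.asymm {a b : ℕ} (h : Prec a b) (h' : Prec b a) : False := by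
  obtain ⟨c, hc, h1⟩ := h
  obtain ⟨d, hd, h2⟩ := h'
  rcases lt_trichotomy c d with h | rfl | h
  · have := hd c h; omega
  · omega
  · have := hc d h; omega

theorem Prec.trans {a b c : ℕ} (h : Prec a b) (h' : Prec b c) : Prec a c := by
  obtain ⟨d, hd, h1⟩ := h
  obtain ⟨e, he, h2⟩ := h'
  rcases lt_trichotomy d e with h | rfl | h
  · exact ⟨d, fun i hi => (hd i hi).trans (he i (by omega)), by rw [← he d h]; exact h1⟩
  · exact ⟨d, fun i hi => (hd i hi).trans (he i hi), by omega⟩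
  · exact ⟨e, fun i hi => (hd i (by omega)).trans (he i hi), by rw [hd e h]; exact h2⟩

theorem exists_first_diff {a b : ℕ} (h : a ≠ b) :
    ∃ c, (∀ i < c, TM (a + i) = TM (b + i)) ∧ TM (a + c) ≠ TM (b + c) := by
  have hex : ∃ c, TM (a + c) ≠ TM (b + c) := by
    by_contra! hall
    exact h (eq_of_agree a b hall)
  classical
  exact ⟨Nat.find hex, fun i hi => not_not.mp (Nat.find_min hex hi), Nat.find_spec hex⟩

theorem Prec.total {a b : ℕ} (h : a ≠ b) : Prec a b ∨ Prec b a := by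
  obtain ⟨c, hc, hne⟩ := exists_first_diff h
  rcases lt_or_gt_of_ne hne with h1 | h1
  · exact Or.inl ⟨c, hc, h1⟩
  · exact Or.inr ⟨c, fun i hi => (hc i hi).symm, h1⟩

theorem prec_succ_iff (m : ℕ) : Prec m (m + 1) ↔ TM m = 0 := by
  have h0 := TM_lt m
  have h1 := TM_lt (m + 1)
  have h2 := TM_lt (m + 2)
  constructor
  · intro h
    by_contra hne
    refine h.asymm ?_
    by_cases h3 : TM (m + 1) = TM m
    · have : TM (m + 2) ≠ TM (m + 1) := fun h4 => no_cube m h3.symm h4.symm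
      refine ⟨1, fun i hi => ?_, ?_⟩
      · obtain rfl : i = 0 := by omega
        exact h3
      · change TM (m + 2) < TM (m + 1)
        omega
    · exact ⟨0, by simp, by change TM (m + 1) < TM m; omega⟩
  · intro h
    by_cases h3 : TM (m + 1) = TM m
    · have : TM (m + 2) ≠ TM (m + 1) := fun h4 => no_cube m h3.symm h4.symm
      refine ⟨1, fun i hi => ?_, ?_⟩
      · obtain rfl : i = 0 := by omega
        exact h3.symm
      · change TM (m + 1) < TM (m + 2)
        omega
    · exact ⟨0, by simp, by change TM m < TM (m + 1); omega⟩

/-! ### Reversed pairs at distance `q` -/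

/-- The words at `a` and `b` first disagree at offset `M`, and the shifts at offsets `0` and
`q ≤ M` are ordered one way at `a` and the other way at `b`. -/
structure Reversal (q M a b : ℕ) : Prop where
  le : q ≤ M
  agree : ∀ i < M, TM (a + i) = TM (b + i)
  ne : TM (a + M) ≠ TM (b + M)
  rev : (Prec a (a + q) ∧ Prec (b + q) b) ∨ (Prec (a + q) a ∧ Prec b (b + q))

theorem Reversal.symm {q M a b : ℕ} (h : Reversal q M a b) : Reversal q M b a :=
  ⟨h.le, fun i hi => (h.agree i hi).symm, h.ne.symm, by have := h.rev; tauto⟩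

/-- In a reversal, on the side where offset `M` continues the period `q`, the comparison of offsets
`0` and `q` is decided beyond `M`, in the direction opposite to the one decided at `M` on
the other side. -/
theorem Reversal.letterLess {q M a b : ℕ} (h : Reversal q M a b)
    (hper : TM (a + (M - q)) = TM (a + M)) :
    LetterLess (TM (a + M)) (a + M) (a + (M - q)) := by
  obtain ⟨hle, hag, hne, hrev⟩ := h
  obtain ⟨r, rfl⟩ : ∃ r, M = q + r := ⟨M - q, by omega⟩
  rw [Nat.add_sub_cancel_left] at hper ⊢
  have ta := TM_lt (a + (q + r))
  have tb := TM_lt (b + (q + r))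
  have e1 : ∀ i, a + q + i = a + (q + i) := fun i => by ring
  have e2 : ∀ i, b + q + i = b + (q + i) := fun i => by ring
  have hbr : TM (a + r) = TM (b + r) := by
    rcases Nat.eq_zero_or_pos q with hq | hq
    · -- `q = 0` would compare a shift with itself
      subst hq
      rcases hrev with ⟨h1, -⟩ | ⟨h1, -⟩ <;> exact (h1.asymm h1).elim
    · exact hag r (by omega)
  -- a comparison decided before offset `r` would be the same at `a` and at `b`
  rcases hrev with ⟨⟨c, hc, h1⟩, ⟨d, hd, h2⟩⟩ | ⟨⟨c, hc, h1⟩, ⟨d, hd, h2⟩⟩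
  · simp only [e1] at hc h1
    simp only [e2] at hd h2
    have hcr : r ≤ c := by
      by_contra! hcr
      have g1 := hag c (by omega)
      have g2 := hag (q + c) (by omega)
      rcases lt_trichotomy c d with hlt | rfl | hlt
      · have := hd c hlt; omega
      · omega
      · have := hc d hlt
        have g1 := hag d (by omega)
        have g2 := hag (q + d) (by omega)
        omega
    have hcr' : c ≠ r := by rintro rfl; omega
    have hdr : d = r := by
      rcases lt_trichotomy d r with hlt | rfl | hlt
      · have := hc d (by omega)
        have g1 := hag d (by omega)
        have g2 := hag (q + d) (by omega)
        omega
      · rfl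
      · have := hd r hlt
        omega
    subst hdr
    have hc1 := TM_lt (a + (q + c))
    refine ⟨c - d, fun i hi => ?_, ?_, ?_⟩
    · have := hc (d + i) (by omega)
      rw [show a + (q + d) + i = a + (q + (d + i)) by ring, add_assoc a d i]
      exact this.symm
    · rw [show a + (q + d) + (c - d) = a + (q + c) by omega]; omega
    · rw [show a + d + (c - d) = a + c by omega]; omega
  · simp only [e1] at hc h1
    simp only [e2] at hd h2
    have hcr : r ≤ c := by
      by_contra! hcr
      have g1 := hag c (by omega)
      have g2 := hag (q + c) (by omega)
      rcases lt_trichotomy c d with hlt | rfl | hlt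
      · have := hd c hlt; omega
      · omega
      · have := hc d hlt
        have g1 := hag d (by omega)
        have g2 := hag (q + d) (by omega)
        omega
    have hcr' : c ≠ r := by rintro rfl; omega
    have hdr : d = r := by
      rcases lt_trichotomy d r with hlt | rfl | hlt
      · have := hc d (by omega)
        have g1 := hag d (by omega)
        have g2 := hag (q + d) (by omega)
        omega
      · rfl
      · have := hd r hlt
        omega
    subst hdr
    have hc1 := TM_lt (a + c)
    refine ⟨c - d, fun i hi => ?_, ?_, ?_⟩
    · have := hc (d + i) (by omega)
      rw [show a + (q + d) + i = a + (q + (d + i)) by ring, add_assoc a d i]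
      exact this
    · rw [show a + (q + d) + (c - d) = a + (q + c) by omega]; omega
    · rw [show a + d + (c - d) = a + c by omega]; omega

/-- At exactly one of the two positions the period `q` continues at offset `M`; by symmetry it may
be taken to be the first one. -/
theorem Reversal.exists_periodic {q M a b : ℕ} (h : Reversal q M a b) :
    ∃ a' b', Reversal q M a' b' ∧ TM (a' + (M - q)) = TM (a' + M) := by
  rcases Nat.eq_zero_or_pos q with hq | hq
  · subst hq
    exact ⟨a, b, h, rfl⟩
  · by_cases hper : TM (a + (M - q)) = TM (a + M)
    · exact ⟨a, b, h, hper⟩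
    · refine ⟨b, a, h.symm, ?_⟩
      have := h.le
      have h1 := h.agree (M - q) (by omega)
      have h2 := h.ne
      have := TM_lt (a + (M - q))
      have := TM_lt (a + M)
      have := TM_lt (b + M)
      omega

theorem Reversal.pow_dvd {q M a b k : ℕ} (h : Reversal q M a b) (hM : 3 * 2 ^ k < 2 * M) :
    2 ^ k ∣ q := by
  obtain ⟨a, b, h, hper⟩ := h.exists_periodic
  have h1 := align k hM h.agree h.ne
  have h2 := (h.letterLess hper).pow_dvd k rfl hper h1
  have hle := h.le
  rw [show a + M = a + (M - q) + q by omega] at h1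
  exact (Nat.dvd_add_right h2).mp h1

/-- No reversal has period `3 * 2 ^ k`. For `M = 3 * 2 ^ k`, dividing positions by `2 ^ k` gives
shifts at `n` and `n + 3` starting with the same letter, and a second occurrence `r` of the three
letters at `n` with the other continuation. -/
theorem Reversal.ne_three_mul {q M a b : ℕ} (k : ℕ) (h : Reversal q M a b) : q ≠ 3 * 2 ^ k := by
  intro hq
  have hk : 0 < 2 ^ k := by positivity
  have hle := h.le
  rcases hle.lt_or_eq with hlt | heq
  · have hd := h.pow_dvd (k := k + 1) (by rw [pow_succ]; omega)
    rw [hq, pow_succ', Nat.mul_dvd_mul_iff_right hk] at hd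
    omega
  subst heq
  obtain ⟨a, b, h, hper⟩ := h.exists_periodic
  have hlen : 3 * 2 ^ k < 2 * q := by omega
  have hL := h.letterLess hper
  have hda := (Nat.dvd_add_left (hq ▸ Dvd.intro_left 3 rfl)).mp (align k hlen h.agree h.ne)
  have hdb := (Nat.dvd_add_left (hq ▸ Dvd.intro_left 3 rfl)).mp
    (align k hlen h.symm.agree h.symm.ne)
  obtain ⟨n, rfl⟩ := hda
  obtain ⟨r, rfl⟩ := hdb
  have e : ∀ x j, 2 ^ k * x + 2 ^ k * j = 2 ^ k * (x + j) := fun x j => by ring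
  have hq' : q = 2 ^ k * 3 := by omega
  have hne := h.ne
  have hag : ∀ j < 3, TM (n + j) = TM (r + j) := fun j hj => by
    have := h.agree (2 ^ k * j) (by rw [hq']; exact Nat.mul_lt_mul_of_pos_left hj hk)
    rwa [e, e, TM_pow_mul, TM_pow_mul] at this
  rw [hq', e, e, TM_pow_mul, TM_pow_mul] at hne
  rw [Nat.sub_self, add_zero, hq', e, TM_pow_mul, TM_pow_mul] at hper
  rw [Nat.sub_self, add_zero, hq', e, TM_pow_mul] at hL
  obtain ⟨c, hc, h1, h2⟩ := hL.of_pow_mul k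
  rw [add_assoc] at h1
  have g0 := hag 0 (by norm_num)
  have g1 := hag 1 (by norm_num)
  have g2 := hag 2 (by norm_num)
  simp only [add_zero] at g0
  have := TM_lt n
  have := TM_lt (n + 1)
  have := TM_lt (n + 2)
  have := TM_lt (n + 3)
  have := TM_lt (n + 4)
  have := TM_lt (n + 5)
  have := TM_lt (n + 6)
  have := TM_lt (r + 3)
  have c0 : c ≠ 0 := by rintro rfl; simp at h2; omega
  have hcc : ∀ i < c, TM (n + (3 + i)) = TM (n + i) := fun i hi => by
    rw [← add_assoc]; exact hc i hi
  have hcube := no_cube (r + 1)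
  simp only [add_assoc] at hcube
  norm_num at hcube
  by_cases hu : TM (n + 1) = TM n
  · -- `y y ȳ y` starts at an odd position, so it is followed by `ȳ`
    have hodd : n % 2 = 1 := by
      by_contra hev
      have := TM_succ_of_even (n := n) (by omega)
      omega
    have n4 : TM (n + 4) = 1 - TM (n + 3) := TM_succ_of_even (n := n + 3) (by omega)
    have c1 : c ≠ 1 := by rintro rfl; norm_num at h1; omega
    have := hcc 1 (by omega)
    norm_num at this
    omega
  · by_cases hv : TM (n + 2) = TM n
    · -- `y ȳ y y` starts at an odd position
      have hodd : n % 2 = 1 := by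
        by_contra hev
        have : TM (n + 3) = 1 - TM (n + 2) := TM_succ_of_even (n := n + 2) (by omega)
        omega
      have n4 : TM (n + 4) = 1 - TM (n + 3) := TM_succ_of_even (n := n + 3) (by omega)
      have n6 : TM (n + 6) = 1 - TM (n + 5) := TM_succ_of_even (n := n + 5) (by omega)
      have c1 : c ≠ 1 := by rintro rfl; norm_num at h1; omega
      have c2 : c ≠ 2 := by rintro rfl; omega
      have := hcc 2 (by omega)
      norm_num at this
      have c3 : c ≠ 3 := by rintro rfl; omega
      have := hcc 3 (by omega)
      norm_num at this
      omega
    · -- the occurrence at `r` would read `y ȳ ȳ ȳ`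
      exact hcube (by omega) (by omega)

/-! ### Ranks and complementary pairs -/

theorem P_lt_of_prec {a N i j : ℕ} (hi : i < N) (h : Prec (a + i) (a + j)) :
    P a N i < P a N j := by
  classical
  unfold P
  apply Finset.card_lt_card
  rw [Finset.ssubset_iff_of_subset]
  · exact ⟨i, by simp [hi, h], by simp; exact fun _ h' => h'.asymm h'⟩
  · intro l hl
    simp only [Finset.mem_filter, Finset.mem_range] at hl ⊢
    exact ⟨hl.1, hl.2.trans h⟩

theorem P_lt_iff {a N i j : ℕ} (hi : i < N) (hj : j < N) :
    P a N i < P a N j ↔ Prec (a + i) (a + j) := by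
  refine ⟨fun h => ?_, P_lt_of_prec hi⟩
  have hne : a + i ≠ a + j := by
    intro he
    obtain rfl : i = j := by omega
    omega
  rcases Prec.total hne with h1 | h1
  · exact h1
  · have := P_lt_of_prec hj h1
    omega

theorem P_inj {a N i j : ℕ} (hi : i < N) (hj : j < N) (h : P a N i = P a N j) : i = j := by
  by_contra hne
  have hne : a + i ≠ a + j := by omega
  rcases Prec.total hne with h1 | h1
  · have := P_lt_of_prec hi h1; omega
  · have := P_lt_of_prec hj h1; omega

/-- Each rank of the partner is a rank of the original permutation at the same position or at
distance `N - k`, and the two ranks at that position differ by at most one. -/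
theorem CompPair.partner {k N a b : ℕ} (h : CompPair k N a b) {i : ℕ} (hi : i < N) :
    ∃ i' < N, P b N i = P a N i' ∧ P a N i' ≤ P a N i + 1 ∧ P a N i ≤ P a N i' + 1 ∧
      (i' = i ∨ i' = i + (N - k) ∨ i = i' + (N - k)) := by
  obtain ⟨hk, hkN, ε, hε, hsw, hmid⟩ := h
  by_cases h1 : i < k
  · have := hsw i h1
    refine ⟨N - k + i, by omega, by omega, by omega, by omega, by omega⟩
  · by_cases h2 : i < N - k
    · exact ⟨i, hi, hmid i (by omega) h2, by omega, by omega, Or.inl rfl⟩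
    · obtain ⟨l, rfl⟩ : ∃ l, i = N - k + l := ⟨i - (N - k), by omega⟩
      have := hsw l (by omega)
      refine ⟨l, by omega, by omega, by omega, by omega, by omega⟩

/-- Passing to the partner keeps the order of positions whose distance is not `N - k`. -/
theorem CompPair.lt_of_lt {k N a b : ℕ} (h : CompPair k N a b) {i j : ℕ} (hi : i < N) (hj : j < N)
    (h1 : j ≠ i + (N - k)) (h2 : i ≠ j + (N - k)) (hlt : P a N i < P a N j) :
    P b N i < P b N j := by
  by_contra hnot
  have hne : P b N i ≠ P b N j := by
    intro he
    obtain rfl := P_inj hi hj he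
    omega
  obtain ⟨i', hi', e1, e2, e3, e4⟩ := h.partner hi
  obtain ⟨j', hj', f1, f2, f3, f4⟩ := h.partner hj
  -- the only possibility is that `i` and `j` exchange two consecutive ranks
  have : i' = j := P_inj hi' hj (a := a) (by omega)
  have : i' ≠ i := by rintro rfl; omega
  omega

theorem CompPair.agree {k N a b : ℕ} (h : CompPair k N a b) (hN : 3 ≤ N) :
    ∀ i < N - 1, TM (a + i) = TM (b + i) := by
  intro i hi
  have hkN := h.2.1
  have hiff : TM (a + i) = 0 ↔ TM (b + i) = 0 := by
    rw [← prec_succ_iff, ← prec_succ_iff, add_assoc, add_assoc,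
      ← P_lt_iff (N := N) (by omega) (by omega), ← P_lt_iff (N := N) (by omega) (by omega)]
    constructor
    · exact h.lt_of_lt (by omega) (by omega) (by omega) (by omega)
    · intro hlt
      by_contra hnot
      have hne : P a N i ≠ P a N (i + 1) := fun he => by
        have := P_inj (by omega) (by omega) he
        omega
      have := h.lt_of_lt (i := i + 1) (j := i) (by omega) (by omega) (by omega) (by omega)
        (by omega)
      omega
  have := TM_lt (a + i)
  have := TM_lt (b + i)
  omega

theorem CompPair.reversal {k N a b : ℕ} (h : CompPair k N a b) (hN : 3 ≤ N) :
    ∃ M, N - 1 ≤ M ∧ Reversal (N - k) M a b := by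
  have hpre := h.agree hN
  obtain ⟨hk, hkN, ε, hε, hsw, -⟩ := h
  have h0 := hsw 0 (by omega)
  rw [add_zero] at h0
  have hab : a ≠ b := by rintro rfl; omega
  obtain ⟨M, hag, hne⟩ := exists_first_diff hab
  have hM : N - 1 ≤ M := by
    by_contra! hlt
    exact hne (hpre M hlt)
  have e : ∀ x, Prec x (x + (N - k)) ↔ P x N 0 < P x N (N - k) := fun x => by
    rw [P_lt_iff (by omega) (by omega), add_zero]
  have e' : ∀ x, Prec (x + (N - k)) x ↔ P x N (N - k) < P x N 0 := fun x => by
    rw [P_lt_iff (by omega) (by omega), add_zero]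
  refine ⟨M, hM, by omega, hag, hne, ?_⟩
  rw [e, e, e', e']
  omega

/-- The scale `2 ^ k` attached to a window of `n + 1` positions. -/
theorem exists_scale {n : ℕ} (hn : 2 ≤ n) : ∃ k, 3 * 2 ^ k < 2 * n ∧ n ≤ 3 * 2 ^ k := by
  have hex : ∃ k, n ≤ 3 * 2 ^ k := ⟨n, by have := Nat.lt_two_pow_self (n := n); omega⟩
  classical
  refine ⟨Nat.find hex, ?_, Nat.find_spec hex⟩
  rcases hk : Nat.find hex with _ | k
  · omega
  · have := Nat.find_min hex (m := k) (by omega)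
    rw [pow_succ]
    omega

theorem CompPair.type_le {s t N a b c : ℕ} (hab : CompPair s N a b) (hac : CompPair t N a c) :
    t ≤ s := by
  by_contra! hlt
  have hs := hab.1
  have ht := hac.2.1
  obtain ⟨M, hM, h⟩ := hab.reversal (by omega)
  obtain ⟨M', hM', h'⟩ := hac.reversal (by omega)
  obtain ⟨k, hk1, hk2⟩ := exists_scale (n := N - 1) (by omega)
  obtain ⟨u, hu⟩ := h.pow_dvd (k := k) (by omega)
  obtain ⟨v, hv⟩ := h'.pow_dvd (k := k) (by omega)
  have h3 := h.ne_three_mul k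
  have hpos : 0 < 2 ^ k := by positivity
  generalize 2 ^ k = x at *
  have hu3 : u < 3 := by
    by_contra! hge
    have := Nat.mul_le_mul_left x hge
    omega
  have hvu : v < u := by
    by_contra! hge
    have := Nat.mul_le_mul_left x hge
    omega
  -- `N ≤ 2 * (N - t)` excludes the remaining values `1 = v < u = 2`
  have hv0 : v ≠ 0 := by rintro rfl; omega
  obtain rfl : v = 1 := by omega
  obtain rfl : u = 2 := by omega
  omega

/-- A subpermutation of `π_T` has at most one complementary partner. -/
theorem at_most_one_complement (s t N a b c : ℕ)
    (hab : CompPair s N a b) (hac : CompPair t N a c) :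
    SamePerm N b c := by
  obtain rfl : s = t := le_antisymm (hac.type_le hab) (hab.type_le hac)
  have hP : ∀ i < N, P b N i = P c N i := by
    obtain ⟨hk, hkN, ε, -, h1, h2⟩ := hab
    obtain ⟨-, -, δ, -, g1, g2⟩ := hac
    intro i hi
    by_cases hik : i < s
    · have := h1 i hik
      have := g1 i hik
      omega
    · by_cases hiN : i < N - s
      · rw [h2 i (by omega) hiN, g2 i (by omega) hiN]
      · obtain ⟨l, rfl⟩ : ∃ l, i = N - s + l := ⟨i - (N - s), by omega⟩
        have := h1 l (by omega)
        have := g1 l (by omega)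
        omega
  intro i hi j hj
  rw [← P_lt_iff hi hj, ← P_lt_iff hi hj, hP i hi, hP j hj]
end
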